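/- Let X and Y be real Banach spaces, k ≥ 1 an integer and P : X → Y a continuous k-homogeneous polynomial. The following are equivalent: (i) P is unconditionally converging; (ii) P maps every WUC-set in X to a relatively (norm) compact subset of Y; (iii) P maps every WUC-set in X to a relatively weakly compact subset of Y. -/

import Mathlib

open Filter Topology Metric

noncomputable section

/-- The Banach space `c₀` of real sequences converging to zero, with the sup norm. -/
abbrev c0 : Type := ZeroAtInftyContinuousMap ℕ ℝ

/-- The unit vector basis of `c₀`. -/
def e (n : ℕ) : c0 :=
  { toFun := fun i => if i = n then (1 : ℝ) else 0
    continuous_toFun := continuous_of_discreteTopology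
    zero_at_infty' := by
      rw [Filter.cocompact_eq_cofinite]
      refine tendsto_const_nhds.congr' ?_
      have h : {n}ᶜ ∈ (Filter.cofinite : Filter ℕ) := by simp [Filter.cofinite]
      filter_upwards [h] with i hi
      simp only [Set.mem_compl_iff, Set.mem_singleton_iff] at hi
      simp [hi] }

/-- A series `∑ xₙ` is weakly unconditionally Cauchy (w.u.C.) if `∑ |φ (xₙ)| < ∞` for every
continuous linear functional `φ`. -/
def WUC {X : Type*} [NormedAddCommGroup X] [NormedSpace ℝ X] (x : ℕ → X) : Prop :=
  ∀ φ : X →L[ℝ] ℝ, Summable fun n => |φ (x n)|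

/-- A sequence is equivalent to the unit vector basis of `c₀`: there are `0 < c ≤ C` with
`c · maxᵢ |aᵢ| ≤ ‖∑ aᵢ xᵢ‖ ≤ C · maxᵢ |aᵢ|` for all finite scalar families. -/
def IsEquivC0Basis {X : Type*} [NormedAddCommGroup X] [NormedSpace ℝ X] (x : ℕ → X) : Prop :=
  ∃ c C : ℝ, 0 < c ∧ c ≤ C ∧ ∀ (n : ℕ) (a : ℕ → ℝ),
    c * (⨆ i : Fin n, |a i|) ≤ ‖∑ i ∈ Finset.range n, a i • x i‖ ∧
    ‖∑ i ∈ Finset.range n, a i • x i‖ ≤ C * (⨆ i : Fin n, |a i|)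

/-- A map (polynomial) is unconditionally converging if for every w.u.C. series `∑ xₙ` the
sequence of values at the partial sums converges in norm. -/
def UCPoly {X Y : Type*} [NormedAddCommGroup X] [NormedSpace ℝ X]
    [NormedAddCommGroup Y] [NormedSpace ℝ Y] (P : X → Y) : Prop :=
  ∀ x : ℕ → X, WUC x →
    ∃ L : Y, Tendsto (fun n => P (∑ i ∈ Finset.range n, x i)) atTop (𝓝 L)

/-- An operator is unconditionally converging if it maps w.u.C. series to unconditionally
convergent series. -/
def UCOp {X Y : Type*} [NormedAddCommGroup X] [NormedSpace ℝ X]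
    [NormedAddCommGroup Y] [NormedSpace ℝ Y] (T : X → Y) : Prop :=
  ∀ x : ℕ → X, WUC x → Summable fun n => T (x n)

/-- A map (polynomial or operator) is compact if the image of the closed unit ball is
relatively norm compact. -/
def CompactMap {X Y : Type*} [NormedAddCommGroup X] [NormedSpace ℝ X]
    [NormedAddCommGroup Y] [NormedSpace ℝ Y] (P : X → Y) : Prop :=
  IsCompact (closure (P '' Metric.closedBall 0 1))

/-- A set is relatively weakly compact if its closure in the weak topology is compact. -/
def RelWeakCompact {Y : Type*} [NormedAddCommGroup Y] [NormedSpace ℝ Y] (s : Set Y) : Prop :=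
  IsCompact (closure ((toWeakSpace ℝ Y) '' s))

/-- A WUC-set is the image of the closed unit ball of `c₀` under a bounded operator. -/
def IsWUCSet {X : Type*} [NormedAddCommGroup X] [NormedSpace ℝ X] (s : Set X) : Prop :=
  ∃ T : c0 →L[ℝ] X, s = ⇑T '' Metric.closedBall 0 1

/-! (iii) ⇒ (i). For a w.u.C. series `∑ xᵢ`, the map `M ↦ P (∑ i ∈ M, xᵢ)` lives on the finite
subsets of `ℕ`, a dense subset of Cantor space, and it suffices to see that it is uniformly
continuous there. Switching a finite set `F` of indices on and off gives a map of the same kind for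
the difference of `P` in the direction `∑ i ∈ F, xᵢ`, which has lower degree, so by induction only
continuity at `∅` is at stake. In the scalar case it follows from boundedness, by comparison with
sets at which the supremum and the infimum are nearly attained. In general, the scalar case extends
the map weakly continuously to Cantor space; the extension has separable range, so by Baire's
theorem, as in the Orlicz–Pettis theorem, it has small oscillation on some open set, and this is
carried over to `∅` by a difference.

(i) ⇒ (ii). By a gliding hump, every sequence in the unit ball of `c₀` has a subsequence whose
coordinates have uniformly bounded variation. Its successive differences form a w.u.C. series, to
whose image `P` can be applied. -/

section FrechetPolynomials

variable {M G : Type*} [AddCommMonoid M] [AddCommGroup G]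

/-- Fréchet's difference characterisation of polynomials: `FrechetDegreeLT n f` says that all
`n`-fold differences of `f` vanish, i.e. that `f` is polynomial of degree less than `n`. -/
def FrechetDegreeLT : ℕ → (M → G) → Prop
  | 0, f => f = 0
  | n + 1, f => ∀ h, FrechetDegreeLT n (fwdDiff h f)

namespace FrechetDegreeLT

lemma zero : ∀ n : ℕ, FrechetDegreeLT n (0 : M → G)
  | 0 => rfl
  | n + 1 => fun h => (fwdDiff_const h (0 : G)).symm ▸ zero n

lemma add : ∀ {n : ℕ} {f g : M → G},
    FrechetDegreeLT n f → FrechetDegreeLT n g → FrechetDegreeLT n (f + g)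
  | 0, _, _, hf, hg => by rw [FrechetDegreeLT] at *; rw [hf, hg, add_zero]
  | _ + 1, f, g, hf, hg => fun h => fwdDiff_add h f g ▸ (hf h).add (hg h)

lemma sum {ι : Type*} {n : ℕ} {s : Finset ι} {f : ι → M → G}
    (hf : ∀ i ∈ s, FrechetDegreeLT n (f i)) : FrechetDegreeLT n (∑ i ∈ s, f i) :=
  Finset.sum_induction f (FrechetDegreeLT n) (fun _ _ => add) (zero n) hf

lemma comp_left {H F : Type*} [AddCommGroup H] [FunLike F G H] [AddMonoidHomClass F G H] (ψ : F) :
    ∀ {n : ℕ} {f : M → G}, FrechetDegreeLT n f → FrechetDegreeLT n (ψ ∘ f)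
  | 0, f, hf => by rw [FrechetDegreeLT] at *; ext; simp [hf]
  | n + 1, f, hf => fun h => by
    have hψ : fwdDiff h (ψ ∘ f) = ψ ∘ fwdDiff h f := by ext; simp [fwdDiff]
    exact hψ ▸ comp_left ψ (hf h)

end FrechetDegreeLT

section Multilinear

variable {R ι V W : Type*} [Semiring R] [AddCommMonoid V] [Module R V] [AddCommGroup W] [Module R W]

lemma fwdDiff_multilinear_piecewise [DecidableEq ι]
    (A : MultilinearMap R (fun _ : ι => V) W) (s : Finset ι) (v : ι → V) (h : V) :
    fwdDiff h (fun x => A (s.piecewise (fun _ => x) v)) =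
      ∑ t ∈ s.ssubsets, fun x => A (t.piecewise (fun _ => x) (s.piecewise (fun _ => h) v)) := by
  ext x
  have hadd : s.piecewise (fun _ => x + h) v =
      s.piecewise ((fun _ => x) + s.piecewise (fun _ => h) v) (s.piecewise (fun _ => h) v) := by
    ext i
    by_cases hi : i ∈ s <;> simp [hi]
  have hself : s.piecewise (fun _ => x) v =
      s.piecewise (fun _ => x) (s.piecewise (fun _ => h) v) := by
    ext i
    by_cases hi : i ∈ s <;> simp [hi]
  rw [fwdDiff, hadd, A.map_piecewise_add, ← Finset.sum_erase_add _ _ (Finset.mem_powerset_self s),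
    hself, add_sub_cancel_right, Finset.sum_apply]
  rfl

lemma frechetDegreeLT_multilinear_piecewise [DecidableEq ι]
    (A : MultilinearMap R (fun _ : ι => V) W) :
    ∀ {n : ℕ} {s : Finset ι} (v : ι → V), s.card < n →
      FrechetDegreeLT n fun x => A (s.piecewise (fun _ => x) v)
  | n + 1, s, v, hs => fun h => by
    rw [fwdDiff_multilinear_piecewise]
    refine .sum fun t ht => frechetDegreeLT_multilinear_piecewise A _ ?_
    have := Finset.card_lt_card (Finset.mem_ssubsets.1 ht)
    omega

lemma frechetDegreeLT_multilinear_diag [Fintype ι] (A : MultilinearMap R (fun _ : ι => V) W) :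
    FrechetDegreeLT (Fintype.card ι + 1) fun x => A fun _ => x := by
  classical
  simpa using frechetDegreeLT_multilinear_piecewise A (s := Finset.univ) 0 (Nat.lt_succ_self _)

end Multilinear

end FrechetPolynomials

section WeakTopology

variable {Y : Type*} [NormedAddCommGroup Y] [NormedSpace ℝ Y]

lemma continuous_dual_comp_toWeakSpace_symm (ψ : StrongDual ℝ Y) :
    Continuous fun y : WeakSpace ℝ Y => ψ ((toWeakSpace ℝ Y).symm y) :=
  WeakBilin.eval_continuous (topDualPairing ℝ Y).flip ψ

lemma tendsto_toWeakSpace_iff {ι : Type*} {l : Filter ι} {u : ι → Y} {y : Y} :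
    Tendsto (fun i => toWeakSpace ℝ Y (u i)) l (𝓝 (toWeakSpace ℝ Y y)) ↔
      ∀ ψ : StrongDual ℝ Y, Tendsto (fun i => ψ (u i)) l (𝓝 (ψ y)) :=
  have hind : IsInducing fun (y : WeakSpace ℝ Y) (ψ : StrongDual ℝ Y) =>
    ψ ((toWeakSpace ℝ Y).symm y) := ⟨rfl⟩
  hind.tendsto_nhds_iff.trans tendsto_pi_nhds

lemma continuous_toWeakSpace_iff {Z : Type*} [TopologicalSpace Z] {F : Z → Y} :
    Continuous (fun z => toWeakSpace ℝ Y (F z)) ↔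
      ∀ ψ : StrongDual ℝ Y, Continuous fun z => ψ (F z) := by
  simp only [continuous_iff_continuousAt, ContinuousAt, tendsto_toWeakSpace_iff]
  exact forall_comm

lemma isClosed_toWeakSpace_image {s : Set Y} (hconv : Convex ℝ s) (hs : IsClosed s) :
    IsClosed (toWeakSpace ℝ Y '' s) :=
  isClosed_of_closure_subset <| by rw [← hconv.toWeakSpace_closure ℝ, hs.closure_eq]

lemma isClosed_preimage_of_continuous_toWeakSpace {Z : Type*} [TopologicalSpace Z] {F : Z → Y}
    (hF : Continuous fun z => toWeakSpace ℝ Y (F z)) {s : Set Y} (hconv : Convex ℝ s)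
    (hs : IsClosed s) : IsClosed (F ⁻¹' s) := by
  simpa only [Set.preimage, (toWeakSpace ℝ Y).injective.mem_set_image] using
    (isClosed_toWeakSpace_image hconv hs).preimage hF

lemma tendsto_of_cauchy_map_of_tendsto_toWeakSpace {ι : Type*} {l : Filter ι} {u : ι → Y} {y : Y}
    (hu : Cauchy (map u l))
    (hy : Tendsto (fun i => toWeakSpace ℝ Y (u i)) l (𝓝 (toWeakSpace ℝ Y y))) :
    Tendsto u l (𝓝 y) := by
  have hl : l.NeBot := map_neBot_iff u |>.1 hu.1
  refine Metric.nhds_basis_closedBall.tendsto_right_iff.2 fun ε hε => ?_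
  obtain ⟨t, ht, htε⟩ := (Metric.cauchy_iff.1 hu).2 ε hε
  filter_upwards [ht] with i hi
  have hball : toWeakSpace ℝ Y y ∈ toWeakSpace ℝ Y '' closedBall (u i) ε :=
    (isClosed_toWeakSpace_image (convex_closedBall _ _) isClosed_closedBall).mem_of_tendsto hy <| by
      filter_upwards [ht] with j hj
      exact ⟨u j, (htε _ hj _ hi).le, rfl⟩
  exact mem_closedBall_comm.1 (((toWeakSpace ℝ Y).injective.mem_set_image).1 hball)

lemma relWeakCompact_of_isCompact_closure {s : Set Y} (hs : IsCompact (closure s)) :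
    RelWeakCompact s :=
  (hs.image (toWeakSpaceCLM ℝ Y).continuous).closure_of_subset (Set.image_mono subset_closure)

namespace RelWeakCompact

lemma mono {s t : Set Y} (ht : RelWeakCompact t) (hst : s ⊆ t) : RelWeakCompact s :=
  ht.of_isClosed_subset isClosed_closure (closure_mono (Set.image_mono hst))

open scoped Pointwise in
lemma sub {s t : Set Y} (hs : RelWeakCompact s) (ht : RelWeakCompact t) :
    RelWeakCompact (s - t) := by
  refine ((IsCompact.prod hs ht).image continuous_sub).closure_of_subset ?_
  rintro _ ⟨_, ⟨x, hx, y, hy, rfl⟩, rfl⟩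
  exact ⟨(toWeakSpace ℝ Y x, toWeakSpace ℝ Y y),
    ⟨subset_closure ⟨x, hx, rfl⟩, subset_closure ⟨y, hy, rfl⟩⟩, (map_sub _ _ _).symm⟩

lemma isBounded_image_dual {s : Set Y} (hs : RelWeakCompact s) (ψ : StrongDual ℝ Y) :
    Bornology.IsBounded (ψ '' s) := by
  refine (IsCompact.image hs (continuous_dual_comp_toWeakSpace_symm ψ)).isBounded.subset ?_
  rintro _ ⟨y, hy, rfl⟩
  exact ⟨toWeakSpace ℝ Y y, subset_closure ⟨y, hy, rfl⟩, rfl⟩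

lemma exists_tendsto_toWeakSpace {s : Set Y} (hs : RelWeakCompact s) {ι : Type*} {l : Filter ι}
    [l.NeBot] {u : ι → Y} (hus : ∀ i, u i ∈ s)
    (hu : ∀ ψ : StrongDual ℝ Y, Cauchy (map (fun i => ψ (u i)) l)) :
    ∃ y, Tendsto (fun i => toWeakSpace ℝ Y (u i)) l (𝓝 (toWeakSpace ℝ Y y)) := by
  obtain ⟨y, -, hy⟩ : ∃ y ∈ closure (toWeakSpace ℝ Y '' s),
      MapClusterPt y l fun i => toWeakSpace ℝ Y (u i) :=
    hs.exists_mapClusterPt <| tendsto_principal.2 <|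
      Eventually.of_forall fun i => subset_closure ⟨u i, hus i, rfl⟩
  refine ⟨(toWeakSpace ℝ Y).symm y, tendsto_toWeakSpace_iff.2 fun ψ => ?_⟩
  exact le_nhds_of_cauchy_adhp (hu ψ) <|
    hy.continuousAt_comp (f := fun y : WeakSpace ℝ Y => ψ ((toWeakSpace ℝ Y).symm y))
      (continuous_dual_comp_toWeakSpace_symm ψ).continuousAt

end RelWeakCompact

lemma isSeparable_range_of_continuous_toWeakSpace {Z : Type*} [TopologicalSpace Z]
    [TopologicalSpace.SeparableSpace Z] {F : Z → Y}
    (hF : Continuous fun z => toWeakSpace ℝ Y (F z)) :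
    TopologicalSpace.IsSeparable (Set.range F) := by
  obtain ⟨D, hD, hDdense⟩ := TopologicalSpace.exists_countable_dense Z
  let V : Submodule ℝ Y := (Submodule.span ℝ (F '' D)).topologicalClosure
  have hV : TopologicalSpace.IsSeparable (V : Set Y) :=
    ((hD.image F).isSeparable.span (R := ℝ)).closure
  have hDV : D ⊆ F ⁻¹' V := fun d hd =>
    Submodule.le_topologicalClosure _ (Submodule.subset_span ⟨d, hd, rfl⟩)
  have hclosed : IsClosed (F ⁻¹' V) := isClosed_preimage_of_continuous_toWeakSpace hF V.convex
    (Submodule.isClosed_topologicalClosure _)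
  exact hV.mono <| Set.range_subset_iff.2 fun z => closure_minimal hDV hclosed (hDdense z)

lemma exists_isOpen_forall_dist_le_of_continuous_toWeakSpace {Z : Type*} [TopologicalSpace Z]
    [TopologicalSpace.SeparableSpace Z] [BaireSpace Z] [Nonempty Z] {F : Z → Y}
    (hF : Continuous fun z => toWeakSpace ℝ Y (F z)) {ε : ℝ} (hε : 0 < ε) :
    ∃ U : Set Z, IsOpen U ∧ U.Nonempty ∧ ∀ z ∈ U, ∀ z' ∈ U, dist (F z) (F z') ≤ ε := by
  obtain ⟨D, hD, hDdense⟩ := isSeparable_range_of_continuous_toWeakSpace hF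
  have := hD.to_subtype
  have hcover : ⋃ y : D, F ⁻¹' closedBall (y : Y) (ε / 2) = Set.univ := by
    refine Set.eq_univ_of_forall fun z => ?_
    obtain ⟨y, hyD, hy⟩ :=
      Metric.mem_closure_iff.1 (hDdense (Set.mem_range_self z)) (ε / 2) (half_pos hε)
    exact Set.mem_iUnion.2 ⟨⟨y, hyD⟩, hy.le⟩
  obtain ⟨y, hy⟩ := nonempty_interior_of_iUnion_of_closed
    (fun _ => isClosed_preimage_of_continuous_toWeakSpace hF (convex_closedBall _ _)
      isClosed_closedBall) hcover
  refine ⟨_, isOpen_interior, hy, fun z hz z' hz' => ?_⟩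
  have hy : ∀ z ∈ interior (F ⁻¹' closedBall (y : Y) (ε / 2)), dist (F z) y ≤ ε / 2 :=
    fun z hz => (interior_subset hz :)
  linarith [dist_triangle_right (F z) (F z') y, hy z hz, hy z' hz']

end WeakTopology

section SetFunctions

lemma continuous_filter_comp {ι Z : Type*} [TopologicalSpace Z] (f : Finset ι → Z) (S : Finset ι) :
    Continuous fun z : ι → Bool => f (S.filter (z ·)) := by
  refine continuous_iff_continuousAt.2 fun z =>
    (continuousAt_const (y := f (S.filter (z ·)))).congr ?_
  have hS : ∀ᶠ z' in 𝓝 z, ∀ i ∈ S, z' i = z i := (eventually_all_finset S).2 fun i _ =>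
    (continuous_apply i).continuousAt.preimage_mem_nhds
      (mem_nhds_discrete.2 (Set.mem_singleton (z i)))
  filter_upwards [hS] with z' hz'
  exact congrArg f (Finset.filter_congr fun i hi => by rw [hz' i hi])

variable {ι : Type*} [DecidableEq ι] {Y : Type*}

/-- Uniform continuity of a function of finite sets, for the uniformity they inherit from the
Cantor space `{0, 1}^ι`: up to a uniformly small error, `f M` depends only on the trace of `M` on
a finite set `S`. -/
def CantorContinuous [PseudoMetricSpace Y] (f : Finset ι → Y) : Prop :=
  TendstoUniformly (fun S M => f (M ∩ S)) f atTop

/-- Continuity at `∅` of a function of finite sets, for the topology they inherit from the Cantor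
space `{0, 1}^ι`. -/
def ContinuousAtEmpty [PseudoMetricSpace Y] (f : Finset ι → Y) : Prop :=
  ∀ ε > 0, ∃ S : Finset ι, ∀ w, Disjoint w S → dist (f w) (f ∅) < ε

/-- The difference of a set function in the direction `F`: the effect of switching all elements
of `F` on rather than off. -/
def finsetDiff [Sub Y] (F : Finset ι) (f : Finset ι → Y) (M : Finset ι) : Y :=
  f (M ∪ F) - f (M \ F)

open scoped Pointwise in
lemma range_finsetDiff_subset [Sub Y] (F : Finset ι) (f : Finset ι → Y) :
    Set.range (finsetDiff F f) ⊆ Set.range f - Set.range f :=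
  Set.range_subset_iff.2 fun M => Set.sub_mem_sub ⟨M ∪ F, rfl⟩ ⟨M \ F, rfl⟩

lemma finsetDiff_sum {V : Type*} [AddCommMonoid V] [AddCommGroup Y] (R : V → Y) (x : ι → V)
    (F : Finset ι) :
    finsetDiff F (fun M => R (∑ i ∈ M, x i)) =
      fun M => fwdDiff (∑ i ∈ F, x i) R (∑ i ∈ M, if i ∈ F then 0 else x i) := by
  ext M
  have hsdiff : ∑ i ∈ M \ F, x i = ∑ i ∈ M, if i ∈ F then 0 else x i := by
    simp only [Finset.sdiff_eq_filter, Finset.sum_filter, ite_not]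
  have hunion : ∑ i ∈ M ∪ F, x i = ∑ i ∈ M \ F, x i + ∑ i ∈ F, x i := by
    rw [← Finset.sdiff_union_self_eq_union, Finset.sum_union Finset.sdiff_disjoint]
  rw [finsetDiff, fwdDiff, hunion, hsdiff]

namespace CantorContinuous

lemma exists_finset_forall_dist_lt [PseudoMetricSpace Y] {f : Finset ι → Y}
    (hf : CantorContinuous f) {ε : ℝ} (hε : 0 < ε) (F : Finset ι) :
    ∃ S, F ⊆ S ∧ ∀ M, dist (f M) (f (M ∩ S)) < ε :=
  ((eventually_ge_atTop F).and (Metric.tendstoUniformly_iff.1 hf ε hε)).exists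

lemma uniformCauchySeqOn [PseudoMetricSpace Y] {f : Finset ι → Y} (hf : CantorContinuous f) :
    UniformCauchySeqOn (fun (S : Finset ι) (z : ι → Bool) => f (S.filter (z ·))) atTop
      Set.univ := by
  refine Metric.uniformCauchySeqOn_iff.2 fun ε hε => ?_
  obtain ⟨S₀, -, hS₀⟩ := hf.exists_finset_forall_dist_lt (half_pos hε) ∅
  have htrace : ∀ S ≥ S₀, ∀ z : ι → Bool,
      dist (f (S.filter (z ·))) (f (S₀.filter (z ·))) < ε / 2 := fun S hS z => by
    simpa only [Finset.filter_inter, Finset.inter_eq_right.2 hS] using hS₀ (S.filter (z ·))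
  refine ⟨S₀, fun S hS S' hS' z _ => ?_⟩
  linarith [dist_triangle_right (f (S.filter (z ·))) (f (S'.filter (z ·)))
    (f (S₀.filter (z ·))), htrace S hS z, htrace S' hS' z]

lemma cauchy_map_atTop [PseudoMetricSpace Y] {f : Finset ι → Y} (hf : CantorContinuous f) :
    Cauchy (map f atTop) := by
  simpa using hf.uniformCauchySeqOn.cauchy_map (Set.mem_univ fun _ => true)

variable [SeminormedAddCommGroup Y] {f : Finset ι → Y}

lemma of_finsetDiff (hdiff : ∀ F, CantorContinuous (finsetDiff F f)) (h0 : ContinuousAtEmpty f) :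
    CantorContinuous f := by
  refine Metric.tendstoUniformly_iff.2 fun ε hε => ?_
  obtain ⟨S₀, hS₀⟩ := h0 (ε / 3) (by positivity)
  have hS : ∀ᶠ S in atTop, ∀ F ∈ S₀.powerset, ∀ M,
      dist (finsetDiff F f M) (finsetDiff F f (M ∩ S)) < ε / 3 :=
    (eventually_all_finset _).2 fun F _ =>
      Metric.tendstoUniformly_iff.1 (hdiff F) (ε / 3) (by positivity)
  filter_upwards [hS, eventually_ge_atTop S₀] with S hS hS₀S M
  have hsplit : ∀ N, M ∩ S₀ ⊆ N → f N = finsetDiff (M ∩ S₀) f N + f (N \ (M ∩ S₀)) :=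
    fun N hN => by rw [finsetDiff, Finset.union_eq_left.2 hN, sub_add_cancel]
  have htail : ∀ N ⊆ M, dist (f (N \ (M ∩ S₀))) (f ∅) < ε / 3 := fun N hN =>
    hS₀ _ <| Finset.disjoint_left.2 fun i hi hi₀ => by
      simp only [Finset.mem_sdiff, Finset.mem_inter] at hi
      exact hi.2 ⟨hN hi.1, hi₀⟩
  rw [hsplit M Finset.inter_subset_left, hsplit (M ∩ S) (Finset.inter_subset_inter_left hS₀S)]
  calc dist (finsetDiff (M ∩ S₀) f M + f (M \ (M ∩ S₀)))
        (finsetDiff (M ∩ S₀) f (M ∩ S) + f ((M ∩ S) \ (M ∩ S₀)))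
      ≤ dist (finsetDiff (M ∩ S₀) f M) (finsetDiff (M ∩ S₀) f (M ∩ S)) +
          (dist (f (M \ (M ∩ S₀))) (f ∅) + dist (f ((M ∩ S) \ (M ∩ S₀))) (f ∅)) :=
        (dist_add_add_le _ _ _ _).trans (add_le_add_right (dist_triangle_right _ _ _) _)
    _ < ε / 3 + (ε / 3 + ε / 3) :=
        add_lt_add (hS _ (Finset.mem_powerset.2 Finset.inter_subset_right) M)
          (add_lt_add (htail M subset_rfl) (htail _ Finset.inter_subset_left))
    _ = ε := by ring

lemma exists_finset_forall_norm_sub_lt {F : Finset ι} (hF : CantorContinuous (finsetDiff F f))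
    {ε : ℝ} (hε : 0 < ε) :
    ∃ S, ∀ w, Disjoint w S → ‖(f w - f ∅) - (f (w ∪ F) - f F)‖ < ε := by
  obtain ⟨S, hFS, hS⟩ := hF.exists_finset_forall_dist_lt hε F
  refine ⟨S, fun w hw => ?_⟩
  have hdist := hS w
  rw [Finset.disjoint_iff_inter_eq_empty.1 hw, dist_comm, dist_eq_norm, finsetDiff, finsetDiff,
    (hw.mono_right hFS).sdiff_eq_left, Finset.empty_union, Finset.empty_sdiff] at hdist
  convert hdist using 2
  abel

end CantorContinuous

lemma continuousAtEmpty_of_isBounded_range {f : Finset ι → ℝ}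
    (hf : Bornology.IsBounded (Set.range f)) (hdiff : ∀ F, CantorContinuous (finsetDiff F f)) :
    ContinuousAtEmpty f := by
  intro ε hε
  obtain ⟨_, ⟨A, rfl⟩, hA⟩ := exists_lt_of_lt_csSup (Set.range_nonempty f)
    (sub_lt_self (sSup (Set.range f)) (half_pos hε))
  obtain ⟨_, ⟨B, rfl⟩, hB⟩ := exists_lt_of_csInf_lt (Set.range_nonempty f)
    (lt_add_of_pos_right (sInf (Set.range f)) (half_pos hε))
  obtain ⟨SA, hSA⟩ := (hdiff A).exists_finset_forall_norm_sub_lt (half_pos hε)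
  obtain ⟨SB, hSB⟩ := (hdiff B).exists_finset_forall_norm_sub_lt (half_pos hε)
  refine ⟨SA ∪ SB, fun w hw => ?_⟩
  obtain ⟨hwA, hwB⟩ := Finset.disjoint_union_right.1 hw
  have hle : f (w ∪ A) ≤ sSup (Set.range f) := le_csSup hf.bddAbove ⟨_, rfl⟩
  have hge : sInf (Set.range f) ≤ f (w ∪ B) := csInf_le hf.bddBelow ⟨_, rfl⟩
  rw [Real.dist_eq, abs_lt]
  constructor
  · linarith [(abs_lt.1 (hSB w hwB)).1]
  · linarith [(abs_lt.1 (hSA w hwA)).2]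

lemma cantorContinuous_zero [PseudoMetricSpace Y] [Zero Y] :
    CantorContinuous (0 : Finset ι → Y) :=
  Metric.tendstoUniformly_iff.2 fun ε hε => Eventually.of_forall fun S M => by simpa using hε

lemma FrechetDegreeLT.cantorContinuous_of_isBounded_range {V : Type*} [AddCommMonoid V] :
    ∀ {n : ℕ} {g : V → ℝ} {x : ι → V}, FrechetDegreeLT n g →
      Bornology.IsBounded (Set.range fun M : Finset ι => g (∑ i ∈ M, x i)) →
      CantorContinuous fun M : Finset ι => g (∑ i ∈ M, x i)
  | 0, _, _, hg, _ => by
    rw [FrechetDegreeLT] at hg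
    exact hg ▸ cantorContinuous_zero
  | n + 1, g, x, hg, hbdd => by
    have hdiff : ∀ F, CantorContinuous (finsetDiff F fun M => g (∑ i ∈ M, x i)) := fun F => by
      have hF := (hbdd.sub hbdd).subset (range_finsetDiff_subset F _)
      rw [finsetDiff_sum] at hF ⊢
      exact cantorContinuous_of_isBounded_range (hg _) hF
    exact .of_finsetDiff hdiff (continuousAtEmpty_of_isBounded_range hbdd hdiff)

section Weak

variable [NormedAddCommGroup Y] [NormedSpace ℝ Y] {f : Finset ι → Y}

lemma RelWeakCompact.exists_continuous_extension (hf : RelWeakCompact (Set.range f))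
    (hψ : ∀ ψ : StrongDual ℝ Y, CantorContinuous (ψ ∘ f)) :
    ∃ F : (ι → Bool) → Y, Continuous (fun z => toWeakSpace ℝ Y (F z)) ∧
      ∀ M, F (fun i => decide (i ∈ M)) = f M := by
  choose F hF using fun z : ι → Bool =>
    hf.exists_tendsto_toWeakSpace (u := fun S : Finset ι => f (S.filter (z ·))) (fun _ => ⟨_, rfl⟩)
      fun ψ => (hψ ψ).uniformCauchySeqOn.cauchy_map (Set.mem_univ z)
  refine ⟨F, continuous_toWeakSpace_iff.2 fun ψ => ?_, fun M => ?_⟩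
  · have hunif := (hψ ψ).uniformCauchySeqOn.tendstoUniformlyOn_of_tendsto
      fun z _ => tendsto_toWeakSpace_iff.1 (hF z) ψ
    exact (tendstoUniformlyOn_univ.1 hunif).continuous
      (Frequently.of_forall fun S => continuous_filter_comp (ψ ∘ f) S)
  · refine (toWeakSpace ℝ Y).injective (tendsto_nhds_unique (hF _) (tendsto_const_nhds.congr' ?_))
    filter_upwards [eventually_ge_atTop M] with S hS
    simp [Finset.filter_mem_eq_inter, Finset.inter_eq_right.2 hS]

lemma RelWeakCompact.exists_finset_forall_dist_union_le [Countable ι]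
    (hf : RelWeakCompact (Set.range f)) (hψ : ∀ ψ : StrongDual ℝ Y, CantorContinuous (ψ ∘ f))
    {ε : ℝ} (hε : 0 < ε) :
    ∃ F S : Finset ι, ∀ w, Disjoint w S → dist (f (w ∪ F)) (f F) ≤ ε := by
  obtain ⟨G, hG, hGf⟩ := hf.exists_continuous_extension hψ
  obtain ⟨U, hU, ⟨z, hz⟩, hUε⟩ := exists_isOpen_forall_dist_le_of_continuous_toWeakSpace hG hε
  obtain ⟨S, u, hu, hSU⟩ := isOpen_pi_iff.1 hU z hz
  have hmem : ∀ w, Disjoint w S → (fun i => decide (i ∈ w ∪ S.filter (z ·))) ∈ U :=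
    fun w hw => hSU fun i hi => by
      have hiw : i ∉ w := Finset.disjoint_right.1 hw hi
      convert (hu i hi).2 using 1
      simpa [hiw] using fun _ => hi
  refine ⟨S.filter (z ·), S, fun w hw => ?_⟩
  simpa only [hGf, Finset.empty_union] using
    hUε _ (hmem w hw) _ (hmem ∅ (Finset.disjoint_empty_left S))

lemma RelWeakCompact.continuousAtEmpty [Countable ι] (hf : RelWeakCompact (Set.range f))
    (hψ : ∀ ψ : StrongDual ℝ Y, CantorContinuous (ψ ∘ f))
    (hdiff : ∀ F, CantorContinuous (finsetDiff F f)) : ContinuousAtEmpty f := by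
  intro ε hε
  obtain ⟨F, S, hS⟩ := hf.exists_finset_forall_dist_union_le hψ (half_pos hε)
  obtain ⟨S', hS'⟩ := (hdiff F).exists_finset_forall_norm_sub_lt (half_pos hε)
  refine ⟨S ∪ S', fun w hw => ?_⟩
  obtain ⟨hwS, hwS'⟩ := Finset.disjoint_union_right.1 hw
  calc dist (f w) (f ∅) ≤ ‖(f w - f ∅) - (f (w ∪ F) - f F)‖ + ‖f (w ∪ F) - f F‖ := by
        rw [dist_eq_norm]; exact norm_le_norm_sub_add _ _
    _ < ε / 2 + ε / 2 := add_lt_add_of_lt_of_le (hS' w hwS') (dist_eq_norm (f _) (f F) ▸ hS w hwS)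
    _ = ε := add_halves ε

lemma CantorContinuous.exists_tendsto (hf : CantorContinuous f)
    (hψ : ∀ ψ : StrongDual ℝ Y, CantorContinuous (ψ ∘ f)) (hw : RelWeakCompact (Set.range f)) :
    ∃ L, Tendsto f atTop (𝓝 L) := by
  obtain ⟨L, hL⟩ := hw.exists_tendsto_toWeakSpace (Set.mem_range_self (f := f))
    fun ψ => (hψ ψ).cauchy_map_atTop
  exact ⟨L, tendsto_of_cauchy_map_of_tendsto_toWeakSpace hf.cauchy_map_atTop hL⟩

lemma FrechetDegreeLT.cantorContinuous_dual_comp {V : Type*} [AddCommMonoid V] {n : ℕ} {g : V → Y}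
    {x : ι → V} (hg : FrechetDegreeLT n g)
    (hw : RelWeakCompact (Set.range fun M : Finset ι => g (∑ i ∈ M, x i))) (ψ : StrongDual ℝ Y) :
    CantorContinuous (ψ ∘ fun M : Finset ι => g (∑ i ∈ M, x i)) := by
  have hbdd := hw.isBounded_image_dual ψ
  rw [← Set.range_comp] at hbdd
  exact (hg.comp_left ψ).cantorContinuous_of_isBounded_range hbdd

lemma FrechetDegreeLT.cantorContinuous_of_relWeakCompact_range [Countable ι] {V : Type*}
    [AddCommMonoid V] :
    ∀ {n : ℕ} {g : V → Y} {x : ι → V}, FrechetDegreeLT n g →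
      RelWeakCompact (Set.range fun M : Finset ι => g (∑ i ∈ M, x i)) →
      CantorContinuous fun M : Finset ι => g (∑ i ∈ M, x i)
  | 0, _, _, hg, _ => by
    rw [FrechetDegreeLT] at hg
    exact hg ▸ cantorContinuous_zero
  | n + 1, g, x, hg, hw => by
    have hdiff : ∀ F, CantorContinuous (finsetDiff F fun M => g (∑ i ∈ M, x i)) := fun F => by
      have hF := (hw.sub hw).mono (range_finsetDiff_subset F _)
      rw [finsetDiff_sum] at hF ⊢
      exact cantorContinuous_of_relWeakCompact_range (hg _) hF
    exact .of_finsetDiff hdiff (hw.continuousAtEmpty (hg.cantorContinuous_dual_comp hw) hdiff)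

end Weak

end SetFunctions

section WUC

variable {ι X : Type*} [NormedAddCommGroup X] [NormedSpace ℝ X]

lemma sum_abs_dual_le {x : ι → X} {C : ℝ} (hx : ∀ s : Finset ι, ‖∑ i ∈ s, x i‖ ≤ C)
    (φ : StrongDual ℝ X) (s : Finset ι) : ∑ i ∈ s, |φ (x i)| ≤ 2 * C * ‖φ‖ := by
  have hφ : ∀ t : Finset ι, |∑ i ∈ t, φ (x i)| ≤ ‖φ‖ * C := fun t => by
    rw [← map_sum]
    exact φ.le_opNorm_of_le (hx t)
  have hpos : ∑ i ∈ s with 0 ≤ φ (x i), |φ (x i)| = ∑ i ∈ s with 0 ≤ φ (x i), φ (x i) :=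
    Finset.sum_congr rfl fun i hi => abs_of_nonneg (Finset.mem_filter.1 hi).2
  have hneg : ∑ i ∈ s with ¬0 ≤ φ (x i), |φ (x i)| = -∑ i ∈ s with ¬0 ≤ φ (x i), φ (x i) := by
    rw [← Finset.sum_neg_distrib]
    exact Finset.sum_congr rfl fun i hi => abs_of_neg (not_le.1 (Finset.mem_filter.1 hi).2)
  rw [← Finset.sum_filter_add_sum_filter_not s (fun i => 0 ≤ φ (x i)), hpos, hneg]
  linarith [(abs_le.1 (hφ {i ∈ s | 0 ≤ φ (x i)})).2, (abs_le.1 (hφ {i ∈ s | ¬0 ≤ φ (x i)})).1]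

lemma norm_sum_smul_le {x : ι → X} {C : ℝ} (hx : ∀ s : Finset ι, ‖∑ i ∈ s, x i‖ ≤ C)
    {a : ι → ℝ} {r : ℝ} {s : Finset ι} (hr : 0 ≤ r) (ha : ∀ i ∈ s, |a i| ≤ r) :
    ‖∑ i ∈ s, a i • x i‖ ≤ 2 * C * r := by
  have hC : 0 ≤ C := (norm_nonneg _).trans (hx ∅)
  refine NormedSpace.norm_le_dual_bound ℝ _ (by positivity) fun φ => ?_
  calc ‖φ (∑ i ∈ s, a i • x i)‖ = |∑ i ∈ s, a i * φ (x i)| := by simp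
    _ ≤ ∑ i ∈ s, |a i * φ (x i)| := Finset.abs_sum_le_sum_abs _ _
    _ ≤ ∑ i ∈ s, r * |φ (x i)| := Finset.sum_le_sum fun i hi => by
        rw [abs_mul]
        exact mul_le_mul_of_nonneg_right (ha i hi) (abs_nonneg _)
    _ = r * ∑ i ∈ s, |φ (x i)| := (Finset.mul_sum _ _ _).symm
    _ ≤ r * (2 * C * ‖φ‖) := mul_le_mul_of_nonneg_left (sum_abs_dual_le hx φ s) hr
    _ = 2 * C * r * ‖φ‖ := by ring

lemma summable_smul_of_tendsto_cofinite_zero [CompleteSpace X] {x : ι → X} {C : ℝ}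
    (hx : ∀ s : Finset ι, ‖∑ i ∈ s, x i‖ ≤ C) {a : ι → ℝ} (ha : Tendsto a cofinite (𝓝 0)) :
    Summable fun i => a i • x i := by
  have hC : 0 ≤ C := (norm_nonneg _).trans (hx ∅)
  refine summable_iff_vanishing_norm.2 fun ε hε => ?_
  let δ : ℝ := ε / (2 * C + 1)
  have hδ : 0 < δ := by positivity
  have hfin : {i | ¬|a i| < δ}.Finite := by
    simpa using eventually_cofinite.1 (ha.eventually (Metric.ball_mem_nhds 0 hδ))
  refine ⟨hfin.toFinset, fun t ht => ?_⟩
  have hat : ∀ i ∈ t, |a i| ≤ δ := fun i hi => le_of_lt <| not_not.1 fun hi' =>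
    Finset.disjoint_left.1 ht hi (hfin.mem_toFinset.2 hi')
  calc ‖∑ i ∈ t, a i • x i‖ ≤ 2 * C * δ := norm_sum_smul_le hx hδ.le hat
    _ < (2 * C + 1) * δ := by linarith
    _ = ε := mul_div_cancel₀ ε (by positivity)

lemma wuc_of_norm_sum_le {x : ℕ → X} {C : ℝ} (hx : ∀ s : Finset ℕ, ‖∑ i ∈ s, x i‖ ≤ C) : WUC x :=
  fun φ => summable_of_sum_le (fun _ => abs_nonneg _) (sum_abs_dual_le hx φ)

namespace WUC

variable {x : ℕ → X}

lemma exists_norm_sum_le (hx : WUC x) : ∃ C, ∀ s : Finset ℕ, ‖∑ i ∈ s, x i‖ ≤ C := by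
  let g : Finset ℕ → StrongDual ℝ (StrongDual ℝ X) := fun s =>
    NormedSpace.inclusionInDoubleDual ℝ X (∑ i ∈ s, x i)
  have hpointwise : ∀ φ, ∃ C, ∀ s, ‖g s φ‖ ≤ C := fun φ => by
    refine ⟨∑' n, |φ (x n)|, fun s => ?_⟩
    calc ‖g s φ‖ = |∑ i ∈ s, φ (x i)| := by simp [g]
      _ ≤ ∑ i ∈ s, |φ (x i)| := Finset.abs_sum_le_sum_abs _ _
      _ ≤ ∑' n, |φ (x n)| := (hx φ).sum_le_tsum s fun _ _ => abs_nonneg _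
  obtain ⟨C, hC⟩ := banach_steinhaus hpointwise
  exact ⟨C, fun s => (NormedSpace.inclusionInDoubleDualLi ℝ (E := X)).norm_map _ ▸ hC s⟩

lemma map {X' : Type*} [NormedAddCommGroup X'] [NormedSpace ℝ X'] (hx : WUC x) (T : X →L[ℝ] X') :
    WUC fun n => T (x n) :=
  fun φ => hx (φ.comp T)

lemma of_succ (hx : WUC fun n => x (n + 1)) : WUC x :=
  fun φ => (summable_nat_add_iff 1).1 (hx φ)

end WUC

lemma c0_abs_apply_le_norm (v : c0) (i : ℕ) : |v i| ≤ ‖v‖ := by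
  simpa using v.toBCF.norm_coe_le_norm i

lemma c0_norm_le {v : c0} {C : ℝ} (hC : 0 ≤ C) (hv : ∀ i, |v i| ≤ C) : ‖v‖ ≤ C := by
  rw [← ZeroAtInftyContinuousMap.norm_toBCF_eq_norm]
  exact (BoundedContinuousFunction.norm_le hC).2 hv

lemma c0_sum_apply (d : ι → c0) (s : Finset ι) (i : ℕ) : (∑ n ∈ s, d n) i = ∑ n ∈ s, d n i :=
  map_sum (⟨⟨fun v => v i, rfl⟩, fun _ _ => rfl⟩ : c0 →+ ℝ) d s

lemma c0_tendsto_cofinite_zero (v : c0) : Tendsto v cofinite (𝓝 0) :=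
  cocompact_eq_cofinite ℕ ▸ v.zero_at_infty'

lemma e_apply (n i : ℕ) : e n i = if i = n then 1 else 0 := rfl

lemma norm_sum_e_le_one (s : Finset ℕ) : ‖∑ n ∈ s, e n‖ ≤ 1 := by
  refine c0_norm_le zero_le_one fun i => ?_
  rw [c0_sum_apply]
  simp only [e_apply, Finset.sum_ite_eq]
  split_ifs <;> simp

lemma WUC.exists_clm [CompleteSpace X] {x : ℕ → X} (hx : WUC x) :
    ∃ T : c0 →L[ℝ] X, ∀ n, T (e n) = x n := by
  obtain ⟨C, hC⟩ := hx.exists_norm_sum_le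
  have hsum : ∀ v : c0, Summable fun i => v i • x i := fun v =>
    summable_smul_of_tendsto_cofinite_zero hC (c0_tendsto_cofinite_zero v)
  let T : c0 →ₗ[ℝ] X :=
    { toFun := fun v => ∑' i, v i • x i
      map_add' := fun v w => by
        simpa [add_smul] using (hsum v).tsum_add (hsum w)
      map_smul' := fun r v => by
        simpa [mul_smul] using (hsum v).tsum_const_smul r }
  have hT : ∀ v, ‖T v‖ ≤ 2 * C * ‖v‖ := fun v =>
    le_of_tendsto' (hsum v).hasSum.norm fun s =>
      norm_sum_smul_le hC (norm_nonneg v) fun i _ => c0_abs_apply_le_norm v i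
  refine ⟨T.mkContinuous (2 * C) hT, fun n => ?_⟩
  calc T (e n) = e n n • x n := tsum_eq_single n fun i hi => by simp [e_apply, hi]
    _ = x n := by simp [e_apply]

lemma WUC.exists_isWUCSet_range_sum_subset [CompleteSpace X] {x : ℕ → X} (hx : WUC x) :
    ∃ s, IsWUCSet s ∧ (Set.range fun M : Finset ℕ => ∑ i ∈ M, x i) ⊆ s := by
  obtain ⟨T, hT⟩ := hx.exists_clm
  refine ⟨_, ⟨T, rfl⟩, Set.range_subset_iff.2 fun M => ⟨∑ n ∈ M, e n, ?_, ?_⟩⟩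
  · simpa using norm_sum_e_le_one M
  · simp [hT]

lemma wuc_of_sum_abs_apply_le {d : ℕ → c0} {C : ℝ}
    (hd : ∀ N i, ∑ n ∈ Finset.range N, |d n i| ≤ C) : WUC d := by
  have hC : 0 ≤ C := by simpa using hd 0 0
  refine wuc_of_norm_sum_le (C := C) fun s => c0_norm_le hC fun i => ?_
  obtain ⟨N, hN⟩ := s.exists_nat_subset_range
  rw [c0_sum_apply]
  calc |∑ n ∈ s, d n i| ≤ ∑ n ∈ s, |d n i| := Finset.abs_sum_le_sum_abs _ _
    _ ≤ ∑ n ∈ Finset.range N, |d n i| :=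
        Finset.sum_le_sum_of_subset_of_nonneg hN fun _ _ _ => abs_nonneg _
    _ ≤ C := hd N i

end WUC

section BoundedVariation

lemma abs_succ_sub_le {a : ℕ → ℝ} {b : ℝ} {p : ℕ} (ha : ∀ n, |a n| ≤ 1)
    (hlt : ∀ n < p, |a n| ≤ (1 / 2) ^ n)
    (hge : ∀ k n, p ≤ k → k < n → |a n - b| ≤ (1 / 2) ^ k) (n : ℕ) :
    |a (n + 1) - a n| ≤
      4 * (1 / 2) ^ n + ((if n = p - 1 then 2 else 0) + if n = p then 2 else 0) := by
  have hpow : (0 : ℝ) ≤ (1 / 2) ^ n := by positivity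
  have hjump : (0 : ℝ) ≤ (if n = p - 1 then 2 else 0) + if n = p then 2 else 0 := by positivity
  obtain hbefore | hat | hafter : n + 1 < p ∨ (n = p - 1 ∨ n = p) ∨ p < n := by omega
  · have hn := hlt n (by omega)
    have hsucc := hlt (n + 1) hbefore
    rw [pow_succ] at hsucc
    linarith [abs_sub (a (n + 1)) (a n)]
  · have htwo : (2 : ℝ) ≤ (if n = p - 1 then 2 else 0) + if n = p then 2 else 0 := by
      split_ifs <;> first | tauto | norm_num
    linarith [abs_sub (a (n + 1)) (a n), ha n, ha (n + 1)]
  · obtain ⟨m, rfl⟩ : ∃ m, n = m + 1 := ⟨n - 1, by omega⟩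
    have hm := hge m (m + 1) (by omega) m.lt_succ_self
    have hsucc := hge (m + 1) (m + 1 + 1) (by omega) (m + 1).lt_succ_self
    rw [pow_succ] at hsucc hpow ⊢
    rw [abs_sub_comm] at hm
    linarith [abs_sub_le (a (m + 1 + 1)) b (a (m + 1))]

lemma sum_range_abs_sub_le {a : ℕ → ℝ} {b : ℝ} {p : ℕ} (ha : ∀ n, |a n| ≤ 1)
    (hlt : ∀ n < p, |a n| ≤ (1 / 2) ^ n)
    (hge : ∀ k n, p ≤ k → k < n → |a n - b| ≤ (1 / 2) ^ k) (N : ℕ) :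
    ∑ n ∈ Finset.range N, |a (n + 1) - a n| ≤ 12 := by
  have hgeom : ∑ n ∈ Finset.range N, (1 / 2 : ℝ) ^ n ≤ 2 := sum_geometric_two_le N
  have hjump : ∀ q, ∑ n ∈ Finset.range N, (if n = q then 2 else 0 : ℝ) ≤ 2 := fun q => by
    rw [Finset.sum_ite_eq']
    split_ifs <;> norm_num
  calc ∑ n ∈ Finset.range N, |a (n + 1) - a n|
      ≤ ∑ n ∈ Finset.range N,
          (4 * (1 / 2) ^ n + ((if n = p - 1 then 2 else 0) + if n = p then 2 else 0)) :=
        Finset.sum_le_sum fun n _ => abs_succ_sub_le ha hlt hge n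
    _ = 4 * ∑ n ∈ Finset.range N, (1 / 2) ^ n +
          (∑ n ∈ Finset.range N, (if n = p - 1 then 2 else 0) +
            ∑ n ∈ Finset.range N, if n = p then 2 else 0) := by
        rw [Finset.sum_add_distrib, Finset.sum_add_distrib, Finset.mul_sum]
    _ ≤ 4 * 2 + (2 + 2) := by gcongr <;> apply_rules
    _ = 12 := by norm_num

lemma c0_exists_subseq_tendsto_apply {u : ℕ → c0} {C : ℝ} (hu : ∀ n, ‖u n‖ ≤ C) :
    ∃ (z : ℕ → ℝ) (φ : ℕ → ℕ), StrictMono φ ∧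
      ∀ i, Tendsto (fun n => u (φ n) i) atTop (𝓝 (z i)) := by
  have hcompact : IsCompact (Set.univ.pi fun _ : ℕ => closedBall (0 : ℝ) C) :=
    isCompact_univ_pi fun _ => isCompact_closedBall 0 C
  obtain ⟨z, -, φ, hφ, hz⟩ := hcompact.isSeqCompact (x := fun n => u n) fun n i _ =>
    mem_closedBall_zero_iff.2 ((c0_abs_apply_le_norm (u n) i).trans (hu n))
  exact ⟨z, φ, hφ, tendsto_pi_nhds.1 hz⟩

lemma c0_exists_gliding_hump {c : ℕ → c0} {z : ℕ → ℝ}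
    (hz : ∀ i, Tendsto (fun n => c n i) atTop (𝓝 (z i))) :
    ∃ φ m : ℕ → ℕ, StrictMono φ ∧ StrictMono m ∧
      (∀ n i, m n ≤ i → |c (φ n) i| ≤ (1 / 2) ^ n) ∧
      ∀ k n i, k < n → i < m k → |c (φ n) i - z i| ≤ (1 / 2) ^ k := by
  have htail : ∀ k, ∃ m, k < m ∧ ∀ i, m ≤ i → |c k i| ≤ (1 / 2) ^ k := fun k => by
    have hk : Tendsto (c k) atTop (𝓝 0) := Nat.cofinite_eq_atTop ▸ c0_tendsto_cofinite_zero (c k)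
    have hsmall : ∀ᶠ i in atTop, |c k i| ≤ (1 / 2) ^ k := by
      simpa using
        hk.eventually (Metric.closedBall_mem_nhds 0 (ε := (1 / 2) ^ k) (by positivity))
    obtain ⟨m, hm⟩ := eventually_atTop.1 hsmall
    exact ⟨max m (k + 1), by omega, fun i hi => hm i (by omega)⟩
  choose m hkm hm using htail
  have hhead : ∀ l, ∀ᶠ k in atTop, m l ≤ k ∧ ∀ i < m l, |c k i - z i| ≤ (1 / 2) ^ l := fun l =>
    (eventually_ge_atTop (m l)).and <| (Set.finite_lt_nat (m l)).eventually_all.2 fun i _ =>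
      (hz i).eventually (Metric.closedBall_mem_nhds _ (by positivity))
  obtain ⟨φ, -, hφ⟩ := exists_seq_of_forall_finset_exists (fun _ => True)
    (fun l k => m l ≤ k ∧ ∀ i < m l, |c k i - z i| ≤ (1 / 2) ^ l) fun s _ => by
      obtain ⟨k, hk⟩ := ((eventually_all_finset s).2 fun l _ => hhead l).exists
      exact ⟨k, trivial, hk⟩
  have hφmono : StrictMono φ :=
    strictMono_nat_of_lt_succ fun n => (hkm _).trans_le (hφ n (n + 1) n.lt_succ_self).1
  have hpow : ∀ n, (1 / 2 : ℝ) ^ φ n ≤ (1 / 2) ^ n := fun n =>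
    pow_le_pow_of_le_one (by norm_num) (by norm_num) (hφmono.le_apply)
  refine ⟨φ, m ∘ φ, hφmono, strictMono_nat_of_lt_succ fun n =>
    (hφ n (n + 1) n.lt_succ_self).1.trans_lt (hkm _), fun n i hi => (hm _ i hi).trans (hpow n),
    fun k n i hkn hi => ((hφ k n hkn).2 i hi).trans (hpow k)⟩

lemma c0_exists_subseq_wuc_sub {u : ℕ → c0} (hu : ∀ n, ‖u n‖ ≤ 1) :
    ∃ φ : ℕ → ℕ, StrictMono φ ∧ WUC fun n => u (φ (n + 1)) - u (φ n) := by
  obtain ⟨z, φ₀, hφ₀, hz⟩ := c0_exists_subseq_tendsto_apply hu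
  obtain ⟨φ, m, hφ, hm, htail, hhead⟩ := c0_exists_gliding_hump hz
  refine ⟨φ₀ ∘ φ, hφ₀.comp hφ, wuc_of_sum_abs_apply_le (C := 12) fun N i => ?_⟩
  have hex : ∃ n, i < m n := ⟨i + 1, hm.le_apply⟩
  exact sum_range_abs_sub_le (a := fun n => u (φ₀ (φ n)) i) (b := z i) (p := Nat.find hex)
    (fun n => (c0_abs_apply_le_norm _ i).trans (hu _))
    (fun n hn => htail n i (not_lt.1 (Nat.find_min hex hn)))
    (fun k n hk hkn => hhead k n i hkn ((Nat.find_spec hex).trans_le (hm.monotone hk))) N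

end BoundedVariation

section UnconditionallyConverging

variable {X Y : Type*} [NormedAddCommGroup X] [NormedSpace ℝ X]
  [NormedAddCommGroup Y] [NormedSpace ℝ Y] {P : X → Y}

lemma isCompact_closure_of_forall_exists_subseq {Z : Type*} [PseudoMetricSpace Z] {s : Set Z}
    (hs : ∀ u : ℕ → Z, (∀ n, u n ∈ s) →
      ∃ (L : Z) (φ : ℕ → ℕ), StrictMono φ ∧ Tendsto (u ∘ φ) atTop (𝓝 L)) :
    IsCompact (closure s) := by
  refine IsSeqCompact.isCompact fun u hu => ?_
  choose w hw hdist using fun n : ℕ =>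
    Metric.mem_closure_iff.1 (hu n) (1 / ((n : ℝ) + 1)) (by positivity)
  obtain ⟨L, φ, hφ, hL⟩ := hs w hw
  have hdist0 : Tendsto (fun n => dist (w n) (u n)) atTop (𝓝 0) :=
    squeeze_zero (fun _ => dist_nonneg) (fun n => (dist_comm (u n) (w n) ▸ hdist n).le)
      tendsto_one_div_add_atTop_nhds_zero_nat
  exact ⟨L, mem_closure_of_tendsto hL (Eventually.of_forall fun n => hw _), φ, hφ,
    hL.congr_dist (hdist0.comp hφ.tendsto_atTop)⟩

lemma UCPoly.exists_tendsto (hP : UCPoly P) {y : ℕ → X} (hy : WUC fun n => y (n + 1) - y n) :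
    ∃ L, Tendsto (fun n => P (y n)) atTop (𝓝 L) := by
  obtain ⟨L, hL⟩ := hP (fun i => if i = 0 then y 0 else y i - y (i - 1))
    (WUC.of_succ (by simpa using hy))
  refine ⟨L, ((tendsto_add_atTop_iff_nat 1).2 hL).congr fun n => ?_⟩
  rw [← Finset.eq_sum_range_sub' y n]

lemma UCPoly.isCompact_closure_image (hP : UCPoly P) {s : Set X} (hs : IsWUCSet s) :
    IsCompact (closure (P '' s)) := by
  obtain ⟨T, rfl⟩ := hs
  refine isCompact_closure_of_forall_exists_subseq fun u hu => ?_
  rw [← Set.image_comp] at hu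
  choose c hc hcu using hu
  obtain ⟨φ, hφ, hwuc⟩ := c0_exists_subseq_wuc_sub fun n => mem_closedBall_zero_iff.1 (hc n)
  obtain ⟨L, hL⟩ := hP.exists_tendsto (y := fun n => T (c (φ n))) (by simpa using hwuc.map T)
  exact ⟨L, φ, hφ, hL.congr fun n => hcu (φ n)⟩

lemma FrechetDegreeLT.exists_tendsto {ι V : Type*} [Countable ι] [AddCommMonoid V] {n : ℕ}
    {g : V → Y} {x : ι → V} (hg : FrechetDegreeLT n g)
    (hw : RelWeakCompact (Set.range fun M : Finset ι => g (∑ i ∈ M, x i))) :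
    ∃ L, Tendsto (fun M : Finset ι => g (∑ i ∈ M, x i)) atTop (𝓝 L) := by
  classical
  exact (hg.cantorContinuous_of_relWeakCompact_range hw).exists_tendsto
    (hg.cantorContinuous_dual_comp hw) hw

lemma FrechetDegreeLT.ucPoly [CompleteSpace X] {n : ℕ} (hP : FrechetDegreeLT n P)
    (hw : ∀ s : Set X, IsWUCSet s → RelWeakCompact (P '' s)) : UCPoly P := by
  intro x hx
  obtain ⟨s, hs, hxs⟩ := hx.exists_isWUCSet_range_sum_subset
  have hrange : RelWeakCompact (Set.range fun M : Finset ℕ => P (∑ i ∈ M, x i)) :=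
    (hw s hs).mono <| Set.range_subset_iff.2 fun M =>
      Set.mem_image_of_mem P (hxs (Set.mem_range_self M))
  obtain ⟨L, hL⟩ := hP.exists_tendsto hrange
  exact ⟨L, hL.comp tendsto_finset_range⟩

end UnconditionallyConverging

theorem uc_iff_wuc_sets_relcompact_general {X Y : Type*}
    [NormedAddCommGroup X] [NormedSpace ℝ X] [CompleteSpace X]
    [NormedAddCommGroup Y] [NormedSpace ℝ Y] {n : ℕ} {P : X → Y} (hP : FrechetDegreeLT n P) :
    List.TFAE
      [ UCPoly P,
        ∀ s : Set X, IsWUCSet s → IsCompact (closure (P '' s)),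
        ∀ s : Set X, IsWUCSet s → RelWeakCompact (P '' s) ] := by
  tfae_have 1 → 2 := fun h _ hs => h.isCompact_closure_image hs
  tfae_have 2 → 3 := fun h s hs => relWeakCompact_of_isCompact_closure (h s hs)
  tfae_have 3 → 1 := hP.ucPoly
  tfae_finish

/-- `P` is unconditionally converging iff it maps WUC-sets to relatively (weakly) compact
sets. -/
theorem uc_iff_wuc_sets_relcompact {X Y : Type*}
    [NormedAddCommGroup X] [NormedSpace ℝ X] [CompleteSpace X]
    [NormedAddCommGroup Y] [NormedSpace ℝ Y] [CompleteSpace Y]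
    (k : ℕ) (hk : 1 ≤ k) (A : ContinuousMultilinearMap ℝ (fun _ : Fin k => X) Y)
    (P : X → Y) (hP : P = fun x => A fun _ => x) :
    List.TFAE
      [ UCPoly P,
        ∀ s : Set X, IsWUCSet s → IsCompact (closure (P '' s)),
        ∀ s : Set X, IsWUCSet s → RelWeakCompact (P '' s) ] :=
  hP ▸ uc_iff_wuc_sets_relcompact_general (frechetDegreeLT_multilinear_diag A.toMultilinearMap)
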